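/- Let p, q > 0 and let X be a random variable with the Beta(p,q) distribution, whose mean is μ = p/(p+q). Then for every h > 0, P(|X − μ| > h) ≤ 2·e^{−2h²(p+q+1)}. -/

import Mathlib

open MeasureTheory Set

/-- The Beta function `B(p,q) = ∫_0^1 x^(p-1) (1-x)^(q-1) dx`. -/
noncomputable def betaFn (p q : ℝ) : ℝ :=
  ∫ x in Ioc (0:ℝ) 1, x ^ (p - 1) * (1 - x) ^ (q - 1)

/-- The Beta(p,q) distribution on `[0,1]`. -/
noncomputable def betaMeasure (p q : ℝ) : Measure ℝ :=
  (volume.restrict (Ioc (0:ℝ) 1)).withDensity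
    (fun x => ENNReal.ofReal (x ^ (p - 1) * (1 - x) ^ (q - 1) / betaFn p q))

/-!
The Beta distribution satisfies `E[(p (1 - X) - q X) f(X) + X (1 - X) f'(X)] = 0`, as one sees by
integrating the derivative of `x ^ p * (1 - x) ^ q * f x` over `[0, 1]`. Taking `f x = exp (t * x)`
and dividing by the moment generating function turns this into the Riccati equation
`(p + q) K' + t K'' = p + t K' (1 - K')` for the cumulant generating function `K`. Since
`K' (1 - K') ≤ 1 / 4`, multiplying by the integrating factor `|t| ^ (p + q - 1)` and integrating
twice gives `K t ≤ p / (p + q) * t + t ^ 2 / (8 * (p + q + 1))`, and Chernoff's bound concludes.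
-/

open ProbabilityTheory (HasSubgaussianMGF cgf integrableExpSet mgf)
open scoped NNReal

lemma rpow_sub_one_mul_self {x : ℝ} (hx : x ≠ 0) (y : ℝ) : x ^ (y - 1) * x = x ^ y := by
  rw [← Real.rpow_add_one hx, sub_add_cancel]

section DifferentialInequality

variable {s : ℝ} {f f' f'' : ℝ → ℝ}

lemma nonpos_of_mul_add_mul_deriv_nonpos {b : ℝ} (hs : 0 < s) (hb : 0 < b)
    (hcont : ContinuousOn f (Icc 0 b)) (hderiv : ∀ x ∈ Ioo 0 b, HasDerivAt f (f' x) x)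
    (hle : ∀ x ∈ Ioo 0 b, s * f x + x * f' x ≤ 0) : f b ≤ 0 := by
  have hanti : AntitoneOn (fun x ↦ x ^ s * f x) (Icc 0 b) := by
    refine antitoneOn_of_hasDerivWithinAt_nonpos
      (f' := fun x ↦ x ^ (s - 1) * (s * f x + x * f' x)) (convex_Icc 0 b)
      ((Real.continuous_rpow_const hs.le).continuousOn.mul hcont) ?_ ?_ <;>
      simp only [interior_Icc]
    · intro x hx
      convert! ((Real.hasDerivAt_rpow_const (Or.inl hx.1.ne')).mul
        (hderiv x hx)).hasDerivWithinAt using 1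
      rw [← rpow_sub_one_mul_self hx.1.ne' s]
      ring
    · exact fun x hx ↦ mul_nonpos_of_nonneg_of_nonpos (Real.rpow_nonneg hx.1.le _) (hle x hx)
  have hprod : b ^ s * f b ≤ 0 := by
    simpa [Real.zero_rpow hs.ne'] using hanti (left_mem_Icc.2 hb.le) (right_mem_Icc.2 hb.le) hb.le
  exact nonpos_of_mul_nonpos_right hprod (Real.rpow_pos_of_pos hb s)

lemma mul_apply_nonpos_of_mul_add_mul_deriv_nonpos (hs : 0 < s)
    (hf : ∀ t, HasDerivAt f (f' t) t) (hle : ∀ t, t * (s * f t + t * f' t) ≤ 0) (t : ℝ) :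
    t * f t ≤ 0 := by
  -- Moving along the ray through `t` treats both signs of `t` at once.
  have hray : ∀ x, HasDerivAt (fun x ↦ t * f (t * x)) (t * (f' (t * x) * t)) x := fun x ↦
    ((hf (t * x)).comp x (hasDerivAt_const_mul t)).const_mul t
  suffices t * f (t * 1) ≤ 0 by rwa [mul_one] at this
  refine nonpos_of_mul_add_mul_deriv_nonpos (f := fun x ↦ t * f (t * x)) hs one_pos
    (fun x _ ↦ (hray x).continuousAt.continuousWithinAt) (fun x _ ↦ hray x) fun x hx ↦ ?_
  refine nonpos_of_mul_nonpos_right (a := x) ?_ hx.1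
  convert! hle (t * x) using 1
  ring

lemma le_quadratic_of_mul_deriv_add_mul_deriv_le {a b : ℝ} (hs : 0 < s)
    (hf : ∀ t, HasDerivAt f (f' t) t) (hf' : ∀ t, HasDerivAt f' (f'' t) t)
    (hle : ∀ t, t * (s * f' t + t * f'' t) ≤ t * (a + b * t)) (t : ℝ) :
    f t ≤ f 0 + a / s * t + b / (2 * (s + 1)) * t ^ 2 := by
  have hderiv : ∀ u, HasDerivAt (fun u ↦ f u - a / s * u - b / (2 * (s + 1)) * u ^ 2)
      (f' u - a / s - b / (s + 1) * u) u := fun u ↦ by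
    convert! ((hf u).sub (hasDerivAt_const_mul (a / s))).sub
      ((hasDerivAt_pow 2 u).const_mul (b / (2 * (s + 1)))) using 1
    push_cast
    field_simp
  have hderiv' : ∀ u, HasDerivAt (fun u ↦ f' u - a / s - b / (s + 1) * u)
      (f'' u - b / (s + 1)) u := fun u ↦
    ((hf' u).sub_const _).sub (hasDerivAt_const_mul _)
  have hsign : ∀ u, u * (f' u - a / s - b / (s + 1) * u) ≤ 0 := by
    refine mul_apply_nonpos_of_mul_add_mul_deriv_nonpos hs hderiv' fun u ↦ ?_
    have hcancel : s * (f' u - a / s - b / (s + 1) * u) + u * (f'' u - b / (s + 1)) =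
        s * f' u + u * f'' u - (a + b * u) := by
      field_simp
      ring
    rw [hcancel, mul_sub, sub_nonpos]
    exact hle u
  have hmax : IsMaxOn (fun u ↦ f u - a / s * u - b / (2 * (s + 1)) * u ^ 2) univ 0 := by
    refine isMaxOn_univ_of_deriv (hderiv 0).continuousAt
      (fun u _ ↦ (hderiv u).differentiableAt.differentiableWithinAt)
      (fun u _ ↦ (hderiv u).differentiableAt.differentiableWithinAt) ?_ ?_
    · exact fun u hu ↦ (hderiv u).deriv ▸ nonneg_of_mul_nonpos_right (hsign u) hu
    · exact fun u hu ↦ (hderiv u).deriv ▸ nonpos_of_mul_nonpos_right (hsign u) hu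
  have hle_zero := hmax (mem_univ t)
  simp only [mem_ofPred_eq] at hle_zero
  linarith

end DifferentialInequality

section BetaMeasure

variable {p q : ℝ}

lemma beta_weight_nonneg {x : ℝ} (hx : x ∈ Ioc 0 1) : 0 ≤ x ^ (p - 1) * (1 - x) ^ (q - 1) :=
  mul_nonneg (Real.rpow_nonneg hx.1.le _) (Real.rpow_nonneg (sub_nonneg.2 hx.2) _)

lemma betaFn_nonneg (p q : ℝ) : 0 ≤ betaFn p q :=
  setIntegral_nonneg measurableSet_Ioc fun _ ↦ beta_weight_nonneg

lemma intervalIntegrable_beta_weight (hp : 0 < p) (hq : 0 < q) :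
    IntervalIntegrable (fun x : ℝ ↦ x ^ (p - 1) * (1 - x) ^ (q - 1)) volume 0 1 := by
  have hint : IntervalIntegrable
      (fun x : ℝ ↦ (x : ℂ) ^ ((p : ℂ) - 1) * (1 - (x : ℂ)) ^ ((q : ℂ) - 1)) volume 0 1 :=
    Complex.betaIntegral_convergent (by simpa) (by simpa)
  rw [intervalIntegrable_iff_integrableOn_Ioc_of_le zero_le_one] at hint ⊢
  refine IntegrableOn.congr_fun (Integrable.re hint) (fun x hx ↦ ?_) measurableSet_Ioc
  have h1x : 0 ≤ 1 - x := sub_nonneg.2 hx.2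
  norm_cast
  rw [← Complex.ofReal_cpow hx.1.le, ← Complex.ofReal_cpow h1x]
  norm_cast

lemma betaFn_pos (hp : 0 < p) (hq : 0 < q) : 0 < betaFn p q := by
  rw [betaFn, ← intervalIntegral.integral_of_le zero_le_one]
  exact intervalIntegral.intervalIntegral_pos_of_pos_on (intervalIntegrable_beta_weight hp hq)
    (fun x hx ↦ mul_pos (Real.rpow_pos_of_pos hx.1 _) (Real.rpow_pos_of_pos (sub_pos.2 hx.2) _))
    one_pos

lemma isProbabilityMeasure_betaMeasure (hp : 0 < p) (hq : 0 < q) :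
    IsProbabilityMeasure (betaMeasure p q) := by
  have hint := (intervalIntegrable_iff_integrableOn_Ioc_of_le zero_le_one).1
    (intervalIntegrable_beta_weight hp hq)
  constructor
  rw [betaMeasure, withDensity_apply _ .univ, setLIntegral_univ,
    ← ofReal_integral_eq_lintegral_ofReal (hint.div_const _), integral_div]
  · exact (congrArg _ (div_self (betaFn_pos hp hq).ne')).trans ENNReal.ofReal_one
  · exact ae_restrict_of_forall_mem measurableSet_Ioc fun x hx ↦
      div_nonneg (beta_weight_nonneg hx) (betaFn_nonneg p q)

lemma ae_betaMeasure_mem_Icc (p q : ℝ) : ∀ᵐ x ∂betaMeasure p q, x ∈ Icc (0 : ℝ) 1 :=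
  (withDensity_absolutelyContinuous _ _).ae_le
    (ae_restrict_of_forall_mem measurableSet_Ioc fun _ hx ↦ Ioc_subset_Icc_self hx)

lemma integral_betaMeasure (p q : ℝ) (f : ℝ → ℝ) :
    ∫ x, f x ∂betaMeasure p q =
      (∫ x in 0..1, x ^ (p - 1) * (1 - x) ^ (q - 1) * f x) / betaFn p q := by
  rw [betaMeasure, integral_withDensity_eq_integral_toReal_smul (by fun_prop) (by simp),
    intervalIntegral.integral_of_le zero_le_one, ← integral_div]
  refine setIntegral_congr_fun measurableSet_Ioc fun x hx ↦ ?_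
  simp only [smul_eq_mul]
  rw [ENNReal.toReal_ofReal (div_nonneg (beta_weight_nonneg hx) (betaFn_nonneg p q)),
    div_mul_eq_mul_div]

lemma integral_stein_betaMeasure (hp : 0 < p) (hq : 0 < q) {f f' : ℝ → ℝ}
    (hf : ContinuousOn f (Icc 0 1)) (hf' : ContinuousOn f' (Icc 0 1))
    (hderiv : ∀ x ∈ Ioo 0 1, HasDerivAt f (f' x) x) :
    ∫ x, (p * (1 - x) - q * x) * f x + x * (1 - x) * f' x ∂betaMeasure p q = 0 := by
  rw [integral_betaMeasure, intervalIntegral.integral_eq_sub_of_hasDerivAt_of_le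
    (f := fun x ↦ x ^ p * (1 - x) ^ q * f x) zero_le_one]
  · simp [Real.zero_rpow hp.ne', Real.zero_rpow hq.ne']
  · have hpow : Continuous fun x : ℝ ↦ x ^ p * (1 - x) ^ q :=
      (Real.continuous_rpow_const hp.le).mul
        ((Real.continuous_rpow_const hq.le).comp (continuous_const.sub continuous_id))
    exact hpow.continuousOn.mul hf
  · intro x hx
    have h1x : 0 < 1 - x := sub_pos.2 hx.2
    convert! ((Real.hasDerivAt_rpow_const (p := p) (Or.inl hx.1.ne')).mul
      (((hasDerivAt_id x).const_sub 1).rpow_const (p := q) (Or.inl h1x.ne'))).mul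
      (hderiv x hx) using 1
    simp only [Pi.mul_apply, id_eq]
    rw [← rpow_sub_one_mul_self hx.1.ne' p, ← rpow_sub_one_mul_self h1x.ne' q]
    ring
  · refine (intervalIntegrable_beta_weight hp hq).mul_continuousOn ?_
    rw [uIcc_of_le zero_le_one]
    fun_prop

lemma integrableExpSet_id_betaMeasure (hp : 0 < p) (hq : 0 < q) :
    integrableExpSet id (betaMeasure p q) = univ := by
  have := isProbabilityMeasure_betaMeasure hp hq
  exact eq_univ_of_forall fun t ↦
    ProbabilityTheory.integrable_exp_mul_of_mem_Icc aemeasurable_id (ae_betaMeasure_mem_Icc p q)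

/-- Kummer's equation `t M'' + (p + q - t) M' = p M` for the moment generating function `M`. -/
lemma mgf_id_betaMeasure_kummer (hp : 0 < p) (hq : 0 < q) (t : ℝ) :
    t * ∫ x, x ^ 2 * Real.exp (t * x) ∂betaMeasure p q +
        (p + q - t) * ∫ x, x * Real.exp (t * x) ∂betaMeasure p q =
      p * mgf id (betaMeasure p q) t := by
  have hint (n : ℕ) : Integrable (fun x ↦ x ^ n * Real.exp (t * x)) (betaMeasure p q) :=
    ProbabilityTheory.integrable_pow_mul_exp_of_mem_interior_integrableExpSet (X := id)
      (by simp [integrableExpSet_id_betaMeasure hp hq]) n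
  have hstein : ∫ x, (p * (1 - x) - q * x) * Real.exp (t * x) +
      x * (1 - x) * (Real.exp (t * x) * t) ∂betaMeasure p q = 0 :=
    integral_stein_betaMeasure hp hq (by fun_prop) (by fun_prop)
      fun x _ ↦ (hasDerivAt_const_mul t).exp
  have hexpand (x : ℝ) : (p * (1 - x) - q * x) * Real.exp (t * x) +
      x * (1 - x) * (Real.exp (t * x) * t) =
      p * (x ^ 0 * Real.exp (t * x)) - (p + q - t) * (x ^ 1 * Real.exp (t * x)) -
        t * (x ^ 2 * Real.exp (t * x)) := by
    ring
  simp only [hexpand] at hstein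
  rw [integral_sub (by fun_prop) (by fun_prop), integral_sub (by fun_prop) (by fun_prop)] at hstein
  simp only [integral_const_mul, pow_zero, pow_one, one_mul] at hstein
  simp only [mgf, id_eq]
  linarith

lemma cgf_id_betaMeasure_riccati (hp : 0 < p) (hq : 0 < q) (t : ℝ) :
    (p + q) * deriv (cgf id (betaMeasure p q)) t +
        t * iteratedDeriv 2 (cgf id (betaMeasure p q)) t =
      p + t * (deriv (cgf id (betaMeasure p q)) t *
        (1 - deriv (cgf id (betaMeasure p q)) t)) := by
  have := isProbabilityMeasure_betaMeasure hp hq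
  have huniv := integrableExpSet_id_betaMeasure hp hq
  have ht : t ∈ interior (integrableExpSet id (betaMeasure p q)) := by simp [huniv]
  have hmgf : mgf id (betaMeasure p q) t ≠ 0 :=
    (ProbabilityTheory.mgf_pos (huniv.ge (mem_univ t))).ne'
  have hkummer := mgf_id_betaMeasure_kummer hp hq t
  rw [ProbabilityTheory.iteratedDeriv_two_cgf ht, ProbabilityTheory.deriv_cgf ht]
  simp only [id_eq]
  set M₁ := ∫ x, x * Real.exp (t * x) ∂betaMeasure p q
  set M₂ := ∫ x, x ^ 2 * Real.exp (t * x) ∂betaMeasure p q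
  field_simp
  linear_combination mgf id (betaMeasure p q) t * hkummer

lemma cgf_id_betaMeasure_le (hp : 0 < p) (hq : 0 < q) (t : ℝ) :
    cgf id (betaMeasure p q) t ≤ p / (p + q) * t + t ^ 2 / (8 * (p + q + 1)) := by
  set K := cgf id (betaMeasure p q)
  have := isProbabilityMeasure_betaMeasure hp hq
  have hK (u : ℝ) : AnalyticAt ℝ K u := ProbabilityTheory.analyticAt_cgf <| by
    simp [integrableExpSet_id_betaMeasure hp hq]
  have hle := le_quadratic_of_mul_deriv_add_mul_deriv_le (a := p) (b := 1 / 4) (add_pos hp hq)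
    (fun u ↦ (hK u).differentiableAt.hasDerivAt)
    (fun u ↦ (hK u).deriv.differentiableAt.hasDerivAt) (fun u ↦ ?_) t
  · convert! hle using 1
    simp only [K, ProbabilityTheory.cgf_zero]
    field_simp
    ring
  · have hric := cgf_id_betaMeasure_riccati hp hq u
    rw [iteratedDeriv_succ, iteratedDeriv_one] at hric
    rw [hric]
    have hquarter : deriv K u * (1 - deriv K u) ≤ 1 / 4 := by
      nlinarith [sq_nonneg (deriv K u - 1 / 2)]
    linarith [mul_le_mul_of_nonneg_left hquarter (mul_self_nonneg u)]

lemma hasSubgaussianMGF_betaMeasure (hp : 0 < p) (hq : 0 < q) :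
    HasSubgaussianMGF (fun x ↦ x - p / (p + q)) (4 * (p + q + 1))⁻¹.toNNReal
      (betaMeasure p q) where
  integrable_exp_mul t := by
    have := isProbabilityMeasure_betaMeasure hp hq
    refine ProbabilityTheory.integrable_exp_mul_of_mem_Icc
      (a := 0 - p / (p + q)) (b := 1 - p / (p + q)) (by fun_prop) ?_
    filter_upwards [ae_betaMeasure_mem_Icc p q] with x hx
    exact ⟨sub_le_sub_right hx.1 _, sub_le_sub_right hx.2 _⟩
  mgf_le t := by
    have := isProbabilityMeasure_betaMeasure hp hq
    have hint : t ∈ integrableExpSet id (betaMeasure p q) := by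
      simp [integrableExpSet_id_betaMeasure hp hq]
    calc mgf (fun x ↦ x - p / (p + q)) (betaMeasure p q) t
        = Real.exp (cgf id (betaMeasure p q) t - p / (p + q) * t) := by
          simp only [sub_eq_add_neg, Real.exp_add, ProbabilityTheory.exp_cgf hint]
          rw [ProbabilityTheory.mgf_add_const, mul_neg, mul_comm t]
          rfl
      _ ≤ Real.exp (t ^ 2 / (8 * (p + q + 1))) := by
          gcongr
          linarith [cgf_id_betaMeasure_le hp hq t]
      _ = Real.exp ((4 * (p + q + 1))⁻¹.toNNReal * t ^ 2 / 2) := by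
          rw [Real.coe_toNNReal _ (by positivity)]
          congr 1
          field_simp
          ring

end BetaMeasure

lemma measureReal_abs_ge_le_of_hasSubgaussianMGF {Ω : Type*} [MeasurableSpace Ω]
    {μ : Measure Ω} {X : Ω → ℝ} {c : ℝ≥0} (hX : HasSubgaussianMGF X c μ) {ε : ℝ} (hε : 0 ≤ ε) :
    μ.real {ω | ε ≤ |X ω|} ≤ 2 * Real.exp (-ε ^ 2 / (2 * c)) := by
  have : IsFiniteMeasure μ := by
    simpa [integrable_const_iff_isFiniteMeasure] using hX.integrable_exp_mul 0
  calc μ.real {ω | ε ≤ |X ω|}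
      = μ.real ({ω | ε ≤ X ω} ∪ {ω | ε ≤ (-X) ω}) := by
        simp only [le_abs, ofPred_or, Pi.neg_apply]
    _ ≤ μ.real {ω | ε ≤ X ω} + μ.real {ω | ε ≤ (-X) ω} := measureReal_union_le _ _
    _ ≤ 2 * Real.exp (-ε ^ 2 / (2 * c)) := by
        linarith [hX.measure_ge_le hε, hX.neg.measure_ge_le hε]

/-- sub-Gaussian concentration of a Beta(p,q) random variable
around its mean `p/(p+q)`. -/
theorem beta_concentration {Ω : Type*} [MeasurableSpace Ω]
    (P : Measure Ω) [IsProbabilityMeasure P] (p q : ℝ) (hp : 0 < p) (hq : 0 < q)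
    (X : Ω → ℝ) (hX : Measurable X) (hlaw : P.map X = betaMeasure p q)
    (h : ℝ) (hh : 0 < h) :
    (P {ω | |X ω - p / (p + q)| > h}).toReal
      ≤ 2 * Real.exp (-2 * h ^ 2 * (p + q + 1)) := by
  have hsub : HasSubgaussianMGF (fun ω ↦ X ω - p / (p + q)) (4 * (p + q + 1))⁻¹.toNNReal P :=
    .of_map (X := fun x ↦ x - p / (p + q)) hX.aemeasurable
      (hlaw ▸ hasSubgaussianMGF_betaMeasure hp hq)
  calc (P {ω | |X ω - p / (p + q)| > h}).toReal
      ≤ P.real {ω | h ≤ |X ω - p / (p + q)|} := measureReal_mono fun ω (hω : h < _) ↦ hω.le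
    _ ≤ 2 * Real.exp (-h ^ 2 / (2 * (4 * (p + q + 1))⁻¹.toNNReal)) :=
        measureReal_abs_ge_le_of_hasSubgaussianMGF hsub hh.le
    _ = 2 * Real.exp (-2 * h ^ 2 * (p + q + 1)) := by
        rw [Real.coe_toNNReal _ (by positivity)]
        congr 2
        field_simp
        ring
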